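/- arXiv:2602.18682 — 2 statements merged into one kernel-verified Lean document; each statement's English description precedes it below -/
import Mathlib

section
/- Let R = ℚ[t₁,…,tₙ] with the symmetric group Sₙ permuting the variables, and let cₙ = t₁t₂⋯tₙ. For m ≥ 0, the set Q_m = { f ∈ R | s(f) ≡ f mod (cₙ)^m for all transpositions s ∈ Sₙ } equals ℚ[t₁,…,tₙ]^{Sₙ} + cₙ^m · ℚ[t₁,…,tₙ], and Q_m is a free module over the ring of symmetric polynomials ℚ[c₁,…,cₙ] of rank n!. -/
/-!
Averaging over `Sₙ` writes any `f` as a symmetric polynomial plus a combination of the differences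
`σ f - f`. If the transpositions fix `f` modulo `cₙ ^ m`, so do all permutations, since `cₙ` is
symmetric; hence all these differences are divisible by `cₙ ^ m`.

For freeness, the point is Chevalley's theorem with `1` in the basis: if `b₀ = 1, b₁, …` is a basis
of `ℚ[t]` over the symmetric polynomials `Λ`, then `1, cₙ ^ m b₁, …` is a basis of
`Λ + cₙ ^ m ℚ[t]`, because `cₙ ^ m` is a nonzero element of `Λ`.

Chevalley's theorem is obtained by counting. The `tᵢ` are the roots of a monic polynomial of
degree `n` over `Λ`; adjoining them one at a time, and splitting off a linear factor each time,
gives a spanning set of at most `n!` elements (`exists_span_adjoin_roots`). Conversely, the `n!`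
homomorphisms `f ↦ σ f` into the fraction field are linearly independent by Dedekind, and they are
`Λ`-linear, so the matrix `(σ b)` of their values on a spanning set has independent rows. The
spanning set therefore has exactly `n!` elements, the matrix is invertible, and its columns being
independent forces the spanning set to be `Λ`-independent (`exists_basis_symmetric`).
-/

open MvPolynomial

section

open scoped Pointwise

/-- A ring generated over `Λ` by the roots of a monic `p ∈ Λ[T]` is spanned over `Λ`
by at most `(deg p)!` elements, including `1`. -/
theorem exists_span_adjoin_roots {R : Type} [CommRing R] [IsDomain R] (l : List R) :
    ∀ (Λ : Type) [CommRing Λ] [Algebra Λ R] (p : Polynomial Λ), p.Monic →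
      p.map (algebraMap Λ R) = (l.map fun t => Polynomial.X - Polynomial.C t).prod →
      ∃ s : Finset R, 1 ∈ s ∧ s.card ≤ l.length.factorial ∧
        ∀ x ∈ Algebra.adjoin Λ {t | t ∈ l}, x ∈ Submodule.span Λ (s : Set R) := by
  classical
  induction l with
  | nil =>
    intro Λ _ _ p _ _
    refine ⟨{1}, by simp, by simp, fun x hx => ?_⟩
    simp only [List.not_mem_nil, Set.ofPred_false, Algebra.adjoin_empty, Algebra.mem_bot] at hx
    obtain ⟨a, rfl⟩ := hx
    rw [Algebra.algebraMap_eq_smul_one]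
    exact Submodule.smul_mem _ _ (Submodule.subset_span (by simp))
  | cons t l ih =>
    intro Λ _ _ p hp hprod
    let Λ' := Algebra.adjoin Λ ({t} : Set R)
    let t' : Λ' := ⟨t, Algebra.subset_adjoin rfl⟩
    have hpt : Polynomial.aeval t p = 0 := by
      rw [Polynomial.aeval_def, ← Polynomial.eval_map, hprod]
      simp
    have hdeg : p.natDegree = l.length + 1 := by
      have h := congrArg Polynomial.natDegree hprod
      rw [hp.natDegree_map, ← Multiset.prod_coe, ← Multiset.map_coe,
        Polynomial.natDegree_multiset_prod_X_sub_C_eq_card] at h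
      simpa using h
    -- Over `Λ' = Λ[t]` the factor `T - t` splits off from `p`.
    have hroot : (p.map (algebraMap Λ Λ')).IsRoot t' := by
      rw [Polynomial.IsRoot, Polynomial.eval_map_algebraMap]
      apply Subtype.val_injective
      change Λ'.val (Polynomial.aeval t' p) = 0
      rw [← Polynomial.aeval_algHom_apply]
      exact hpt
    obtain ⟨q, hq⟩ := Polynomial.dvd_iff_isRoot.mpr hroot
    have hqm : q.Monic :=
      (Polynomial.monic_X_sub_C t').of_mul_monic_left (hq ▸ hp.map _)
    have hqprod : q.map (algebraMap Λ' R) =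
        (l.map fun t => Polynomial.X - Polynomial.C t).prod := by
      have h := congrArg (Polynomial.map (algebraMap Λ' R)) hq
      rw [Polynomial.map_map, ← IsScalarTower.algebraMap_eq, hprod, Polynomial.map_mul,
        List.map_cons, List.prod_cons] at h
      have h2 : (Polynomial.X - Polynomial.C t' : Polynomial Λ').map (algebraMap Λ' R)
          = Polynomial.X - Polynomial.C t := by simp [t']
      rw [h2] at h
      exact (mul_left_cancel₀ (Polynomial.X_sub_C_ne_zero t) h).symm
    obtain ⟨s, h1, hcard, hs⟩ := ih Λ' q hqm hqprod
    let P : Finset R := (Finset.range (l.length + 1)).image fun j => t ^ j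
    refine ⟨P * s, ?_, ?_, fun x hx => ?_⟩
    · exact Finset.mem_mul.mpr ⟨1, Finset.mem_image.mpr ⟨0, by simp, by simp⟩, 1, h1, by simp⟩
    · rw [List.length_cons, Nat.factorial_succ]
      exact Finset.card_mul_le.trans
        (Nat.mul_le_mul (Finset.card_image_le.trans (by simp)) hcard)
    · have hx' : x ∈ Algebra.adjoin Λ' {t | t ∈ l} := by
        induction hx using Algebra.adjoin_induction with
        | mem u hu =>
          rcases List.mem_cons.mp hu with rfl | hu
          · exact (Algebra.adjoin Λ' {t | t ∈ l}).algebraMap_mem t'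
          · exact Algebra.subset_adjoin hu
        | algebraMap a =>
          rw [IsScalarTower.algebraMap_apply Λ Λ' R]
          exact Subalgebra.algebraMap_mem _ _
        | add u v _ _ hu hv => exact add_mem hu hv
        | mul u v _ _ hu hv => exact mul_mem hu hv
      have hΛ' : ∀ a : Λ', (a : R) ∈ Submodule.span Λ (P : Set R) := by
        rintro ⟨a, ha⟩
        obtain ⟨f, rfl⟩ := (Algebra.adjoin_singleton_eq_range_aeval Λ t).le ha
        change Polynomial.aeval t f ∈ _
        rw [← Polynomial.aeval_modByMonic_eq_self_of_root hpt,
          Polynomial.aeval_eq_sum_range]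
        refine Submodule.sum_mem _ fun j hj => Submodule.smul_mem _ _
          (Submodule.subset_span ?_)
        have hlt : j < l.length + 1 := by
          by_cases hp1 : p = 1
          · rw [hp1, Polynomial.natDegree_one] at hdeg
            omega
          · have := Polynomial.natDegree_modByMonic_lt f hp hp1
            have := Finset.mem_range.mp hj
            omega
        exact Finset.mem_coe.mpr (Finset.mem_image.mpr ⟨j, Finset.mem_range.mpr hlt, rfl⟩)
      have key : ∀ a : Λ', (a : R) * x ∈ Submodule.span Λ ((P * s : Finset R) : Set R) := by
        rw [Finset.coe_mul, ← Submodule.span_mul_span]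
        have hxs := hs x hx'
        clear hx hx'
        induction hxs using Submodule.span_induction with
        | mem y hy => exact fun a => Submodule.mul_mem_mul (hΛ' a) (Submodule.subset_span hy)
        | zero => simp
        | add y z _ _ hy hz => exact fun a => mul_add (a : R) y z ▸ add_mem (hy a) (hz a)
        | smul b y _ hy =>
          intro a
          have := hy (a * b)
          rwa [Subalgebra.coe_mul, mul_assoc] at this
      simpa using key 1

end

/-- At most `n!` elements spanning `ℚ[t]` over the symmetric polynomials, including `1`. -/
theorem exists_span_symmetric (n : ℕ) :
    ∃ s : Finset (MvPolynomial (Fin n) ℚ), 1 ∈ s ∧ s.card ≤ n.factorial ∧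
      Submodule.span (symmetricSubalgebra (Fin n) ℚ) (s : Set (MvPolynomial (Fin n) ℚ)) = ⊤ := by
  let l : List (MvPolynomial (Fin n) ℚ) := List.ofFn X
  let P : Polynomial (MvPolynomial (Fin n) ℚ) :=
    (l.map fun t => Polynomial.X - Polynomial.C t).prod
  have hPprod : P = ∏ i : Fin n, (Polynomial.X - Polynomial.C (X i)) := by
    simp [P, l, List.map_ofFn, List.prod_ofFn]
  have hPm : P.Monic := by
    rw [hPprod]
    exact Polynomial.monic_prod_X_sub_C _ _
  have hlift : P ∈ Polynomial.lifts
      (algebraMap (symmetricSubalgebra (Fin n) ℚ) (MvPolynomial (Fin n) ℚ)) := by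
    rw [Polynomial.lifts_iff_coeff_lifts]
    refine fun k => ⟨⟨P.coeff k, fun e => ?_⟩, rfl⟩
    change (rename e : _ →ₐ[ℚ] _).toRingHom (P.coeff k) = _
    rw [← Polynomial.coeff_map]
    congr 1
    rw [hPprod, Polynomial.map_prod]
    simpa using Equiv.prod_comp e
      fun i => (Polynomial.X - Polynomial.C (X i) : Polynomial (MvPolynomial (Fin n) ℚ))
  obtain ⟨p, hp, -, hpm⟩ := Polynomial.lifts_and_natDegree_eq_and_monic hlift hPm
  obtain ⟨s, h1, hcard, hs⟩ := exists_span_adjoin_roots l _ p hpm hp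
  refine ⟨s, h1, by simpa [l] using hcard, eq_top_iff.mpr fun f _ => hs f ?_⟩
  induction f using MvPolynomial.induction_on with
  | C a =>
    exact Subalgebra.algebraMap_mem _ (⟨C a, IsSymmetric.C a⟩ : symmetricSubalgebra (Fin n) ℚ)
  | add f g hf hg => exact add_mem (hf trivial) (hg trivial)
  | mul_X f i hf =>
    exact mul_mem (hf trivial) (Algebra.subset_adjoin (by simp [l]))

/-- Chevalley's theorem for `Sₙ`, with `1` as a member of the basis. -/
theorem exists_basis_symmetric (n : ℕ) :
    ∃ (b : Fin n.factorial → MvPolynomial (Fin n) ℚ) (i₀ : Fin n.factorial), b i₀ = 1 ∧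
      LinearIndependent (symmetricSubalgebra (Fin n) ℚ) b ∧
      Submodule.span (symmetricSubalgebra (Fin n) ℚ) (Set.range b) = ⊤ := by
  obtain ⟨s, h1, hcard, hs⟩ := exists_span_symmetric n
  let L := FractionRing (MvPolynomial (Fin n) ℚ)
  let φ : Equiv.Perm (Fin n) → (MvPolynomial (Fin n) ℚ →+* L) := fun σ =>
    (algebraMap _ L).comp (rename σ : _ →ₐ[ℚ] _).toRingHom
  have hinj : Function.Injective (algebraMap (MvPolynomial (Fin n) ℚ) L) :=
    IsFractionRing.injective _ _
  have hφinj : Function.Injective fun σ => (φ σ : MvPolynomial (Fin n) ℚ →* L) := by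
    intro σ τ h
    ext i
    have h' := hinj (DFunLike.congr_fun h (X i))
    exact congrArg Fin.val (by simpa using h')
  have hφsymm : ∀ σ (c : symmetricSubalgebra (Fin n) ℚ),
      φ σ c = algebraMap _ L (c : MvPolynomial (Fin n) ℚ) :=
    fun σ c => congrArg (algebraMap _ L) (c.2 σ)
  -- Dedekind independence of the `n!` homomorphisms `φ σ`, restricted to the spanning set.
  have hrow : LinearIndependent L fun (σ : Equiv.Perm (Fin n)) (y : s) => φ σ y := by
    have hD := (linearIndependent_monoidHom (MvPolynomial (Fin n) ℚ) L).comp _ hφinj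
    rw [Fintype.linearIndependent_iff] at hD ⊢
    intro g hg
    refine hD g (funext fun f => ?_)
    have hf : f ∈ Submodule.span (symmetricSubalgebra (Fin n) ℚ)
      (s : Set (MvPolynomial (Fin n) ℚ)) := hs ▸ Submodule.mem_top
    simp only [Finset.sum_apply, Pi.smul_apply, Pi.zero_apply, Function.comp_apply,
      smul_eq_mul, MonoidHom.coe_coe]
    induction hf using Submodule.span_induction with
    | mem y hy => simpa using congrFun hg ⟨y, hy⟩
    | zero => simp
    | add y z _ _ hy hz => simp [mul_add, Finset.sum_add_distrib, hy, hz]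
    | smul c y _ hy =>
      simp only [Algebra.smul_def, map_mul]
      change ∑ σ, g σ * (φ σ c * φ σ y) = 0
      simp_rw [hφsymm, mul_left_comm (g _), ← Finset.mul_sum, hy, mul_zero]
  have hcard' : s.card = n.factorial := by
    refine le_antisymm hcard ?_
    simpa [Fintype.card_perm] using hrow.fintype_card_le_finrank
  let e : Fin n.factorial ≃ s := (s.equivFinOfCardEq hcard').symm
  let e' : Fin n.factorial ≃ Equiv.Perm (Fin n) :=
    (Fintype.equivFinOfCardEq (by simp [Fintype.card_perm])).symm
  let M : Matrix (Fin n.factorial) (Fin n.factorial) L := fun k i => φ (e' k) (e i)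
  have hM : IsUnit M := by
    rw [← Matrix.linearIndependent_rows_iff_isUnit]
    exact (hrow.comp e' e'.injective).map' (LinearEquiv.funCongrLeft L L e).toLinearMap
      (LinearEquiv.ker _)
  refine ⟨fun i => e i, e.symm ⟨1, h1⟩, by simp, ?_, ?_⟩
  · have hcol := Matrix.linearIndependent_cols_iff_isUnit.mpr hM
    rw [Fintype.linearIndependent_iff] at hcol ⊢
    intro c hc i
    have := hcol (fun i => algebraMap _ L (c i : MvPolynomial (Fin n) ℚ)) (funext fun k => by
      have h := congrArg (φ (e' k)) hc
      simp only [Algebra.smul_def, map_sum, map_mul, map_zero] at h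
      simp only [Finset.sum_apply, Pi.smul_apply, smul_eq_mul, ← hφsymm (e' k)]
      exact h) i
    exact Subtype.val_injective (hinj (by simpa using this))
  · rw [← hs]
    congr 1
    ext y
    constructor
    · rintro ⟨i, rfl⟩
      exact (e i).2
    · exact fun hy => ⟨e.symm ⟨y, hy⟩, by simp⟩

theorem rename_prod_X_pow {n : ℕ} (m : ℕ) (σ : Equiv.Perm (Fin n)) :
    rename σ ((∏ i : Fin n, (X i : MvPolynomial (Fin n) ℚ)) ^ m) = (∏ i : Fin n, X i) ^ m := by
  rw [map_pow, map_prod]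
  simp only [rename_X]
  rw [Equiv.prod_comp σ (fun i => (X i : MvPolynomial (Fin n) ℚ))]

/-- Congruence under transpositions propagates to all permutations because the modulus
`cₙ ^ m` is symmetric. -/
theorem dvd_rename_sub_of_swap {n m : ℕ} {f : MvPolynomial (Fin n) ℚ}
    (h : ∀ i j : Fin n, i ≠ j → (∏ i : Fin n, X i) ^ m ∣ rename (Equiv.swap i j) f - f)
    (σ : Equiv.Perm (Fin n)) : (∏ i : Fin n, X i) ^ m ∣ rename σ f - f := by
  induction σ using Equiv.Perm.swap_induction_on with
  | one => simp
  | swap_mul σ i j hij ih =>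
    have h1 := map_dvd (rename (Equiv.swap i j)) ih
    rw [rename_prod_X_pow, map_sub, rename_rename] at h1
    simpa [Equiv.Perm.coe_mul] using dvd_add h1 (h i j hij)

/-- Averaging over `Sₙ` splits off the symmetric part. -/
theorem exists_symmetric_add {n m : ℕ} {f : MvPolynomial (Fin n) ℚ}
    (h : ∀ σ : Equiv.Perm (Fin n), (∏ i : Fin n, X i) ^ m ∣ rename σ f - f) :
    ∃ a b : MvPolynomial (Fin n) ℚ, a.IsSymmetric ∧ f = a + (∏ i : Fin n, X i) ^ m * b := by
  let a : MvPolynomial (Fin n) ℚ :=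
    C ((n.factorial : ℚ)⁻¹) * ∑ σ : Equiv.Perm (Fin n), rename σ f
  have hsub : f - a = -(C ((n.factorial : ℚ)⁻¹) *
      ∑ σ : Equiv.Perm (Fin n), (rename σ f - f)) := by
    have hC : (C ((n.factorial : ℚ)⁻¹) * (n.factorial : MvPolynomial (Fin n) ℚ)) = 1 := by
      rw [← map_natCast (C : ℚ →+* MvPolynomial (Fin n) ℚ), ← C_mul,
        inv_mul_cancel₀ (by exact_mod_cast n.factorial_ne_zero), C_1]
    rw [Finset.sum_sub_distrib, Finset.sum_const, Finset.card_univ, Fintype.card_perm,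
      Fintype.card_fin, nsmul_eq_mul, mul_sub, ← mul_assoc, hC]
    ring
  obtain ⟨b, hb⟩ : (∏ i : Fin n, X i) ^ m ∣ f - a := by
    rw [hsub]
    exact (Dvd.dvd.mul_left (Finset.dvd_sum fun σ _ => h σ) _).neg_right
  refine ⟨a, b, fun e => ?_, by rw [← hb]; ring⟩
  simp only [a, map_mul, map_sum, rename_C, rename_rename]
  congr 1
  exact Equiv.sum_comp (Equiv.mulLeft e) fun σ : Equiv.Perm (Fin n) => rename σ f

/-- For `R = ℚ[t₁,…,tₙ]` with `Sₙ` permuting the variables and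
`cₙ = t₁⋯tₙ`, the set `Q_m = {f | s(f) ≡ f mod (cₙ)^m for all transpositions s}` equals
`ℚ[t₁,…,tₙ]^{Sₙ} + cₙ^m·ℚ[t₁,…,tₙ]`, and `Q_m` is a free module of rank `n!` over the
symmetric polynomials. -/
theorem Qm_symmetric_group_presentation_and_freeness (n : ℕ) (m : ℕ) :
    ({f : MvPolynomial (Fin n) ℚ | ∀ i j : Fin n, i ≠ j →
        rename (⇑(Equiv.swap i j)) f - f ∈
          (Ideal.span {(∏ i : Fin n, (X i : MvPolynomial (Fin n) ℚ))}) ^ m} =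
      {f : MvPolynomial (Fin n) ℚ | ∃ a b : MvPolynomial (Fin n) ℚ,
        a.IsSymmetric ∧ f = a + (∏ i : Fin n, X i) ^ m * b}) ∧
    ∃ bas : Fin (Nat.factorial n) → MvPolynomial (Fin n) ℚ,
      (∀ i, bas i ∈ {f : MvPolynomial (Fin n) ℚ | ∃ a b : MvPolynomial (Fin n) ℚ,
          a.IsSymmetric ∧ f = a + (∏ i : Fin n, X i) ^ m * b}) ∧
      ∀ f ∈ {f : MvPolynomial (Fin n) ℚ | ∃ a b : MvPolynomial (Fin n) ℚ,
          a.IsSymmetric ∧ f = a + (∏ i : Fin n, X i) ^ m * b},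
        ∃! c : Fin (Nat.factorial n) → symmetricSubalgebra (Fin n) ℚ,
          f = ∑ i, (c i : MvPolynomial (Fin n) ℚ) * bas i := by
    classical
  have hcsymm : ((∏ i : Fin n, (X i : MvPolynomial (Fin n) ℚ)) ^ m).IsSymmetric :=
    fun σ => rename_prod_X_pow m σ
  refine ⟨Set.ext fun f => ?_, ?_⟩
  · simp only [Set.mem_ofPred_eq, Ideal.span_singleton_pow, Ideal.mem_span_singleton]
    refine ⟨fun h => exists_symmetric_add (dvd_rename_sub_of_swap h), ?_⟩
    rintro ⟨a, b, ha, rfl⟩ i j -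
    rw [map_add, map_mul, ha, hcsymm, add_sub_add_left_eq_sub, ← mul_sub]
    exact dvd_mul_right _ _
  · obtain ⟨b, i₀, hb1, hli, hspan⟩ := exists_basis_symmetric n
    let q : symmetricSubalgebra (Fin n) ℚ := ⟨(∏ i : Fin n, X i) ^ m, hcsymm⟩
    have hq : q ≠ 0 := fun h => pow_ne_zero m
      (Finset.prod_ne_zero_iff.mpr fun i _ => X_ne_zero i) (congrArg Subtype.val h)
    -- `w i` scales the `i`-th basis vector: `1` stays, the others are multiplied by `cₙ ^ m`.
    let w : Fin n.factorial → symmetricSubalgebra (Fin n) ℚ := fun i => if i = i₀ then 1 else q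
    have hw : ∀ i, w i ≠ 0 := fun i => by
      by_cases h : i = i₀ <;> simp [w, h, hq]
    refine ⟨fun i => (w i : MvPolynomial (Fin n) ℚ) * b i, fun i => ?_, ?_⟩
    · by_cases h : i = i₀
      · exact ⟨1, 0, IsSymmetric.one, by simp [w, h, hb1]⟩
      · exact ⟨0, b i, IsSymmetric.zero, by simp [w, h, q]⟩
    · rintro f ⟨a, g, ha, rfl⟩
      obtain ⟨d, hd⟩ := (Submodule.mem_span_range_iff_exists_fun _).mp
        (hspan.ge (Submodule.mem_top (x := g)))
      let c : Fin n.factorial → symmetricSubalgebra (Fin n) ℚ :=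
        fun i => if i = i₀ then ⟨a, ha⟩ + q * d i else d i
      have hc : ∀ i, (c i : MvPolynomial (Fin n) ℚ) * ((w i : MvPolynomial (Fin n) ℚ) * b i) =
          (if i = i₀ then a else 0) + (∏ i : Fin n, X i) ^ m * (d i • b i) := fun i => by
        by_cases h : i = i₀
        · subst h
          simp [c, w, q, hb1, Algebra.smul_def]
        · simp [c, w, q, h, Algebra.smul_def, mul_left_comm]
      have hexists : a + (∏ i : Fin n, X i) ^ m * g =
          ∑ i, (c i : MvPolynomial (Fin n) ℚ) * ((w i : MvPolynomial (Fin n) ℚ) * b i) := by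
        simp_rw [hc, Finset.sum_add_distrib, ← Finset.mul_sum, hd]
        simp
      refine ⟨c, hexists, fun c' hc' => funext fun i => ?_⟩
      have hz := Fintype.linearIndependent_iff.mp hli (fun i => (c' i - c i) * w i) (by
        have h := hc'.symm.trans hexists
        rw [← sub_eq_zero, ← Finset.sum_sub_distrib] at h
        rw [← h]
        refine Finset.sum_congr rfl fun i _ => ?_
        rw [← mul_assoc, ← mul_assoc, ← sub_mul, ← sub_mul]
        rfl) i
      exact sub_eq_zero.mp ((mul_eq_zero.mp hz).resolve_right (hw i))
end

section
/- Let R = ℚ[t₁,t₂,t₃] with B₃ acting by signed permutations of the variables, θ₂ = t₁²t₂² + t₁²t₃² + t₂²t₃², and invariants R^{B₃} = ℚ[q₁,q₂,q₃] where q_i = σ_i(t₁²,t₂²,t₃²). The surjection ℚ[q₁,q₂,q₃] → ℚ[q₁,q₃] sending q₂ ↦ 0 has kernel the principal ideal (q₂), and ℚ[q₁,q₃] is the invariant ring of the dihedral group D₆ ⊂ B₃ acting on the hyperplane t₁+t₂+t₃ = 0 as specified. Consequently Q_m(B₃,D₆) := ℚ[q₁,q₂,q₃] + q₂^m·ℚ[t₁,t₂,t₃]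 is a free ℚ[q₁,q₂,q₃]-module of rank 48. -/
/-!
The polynomial ring `R = ℚ[t₁,t₂,t₃]` is a free module over `A = ℚ[q₁,q₂,q₃]`, with basis the 48
monomials `t₁ᵃ t₂ᵇ t₃ᶜ`, `a < 6`, `b < 4`, `c < 2`.

* They span because `t₁` is a root of `x⁶ - q₁x⁴ + q₂x² - q₃`, `t₂` of a monic quartic over `A[t₁]`
  and `t₃` of a monic quadratic over `A[t₁,t₂]` (`staircaseMonomial_mem_span`,
  `span_staircaseMonomial`).
* They are independent because `t₃`, `t₂`, `t₁` have respectively 2, 4, 6 distinct images under the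
  signed permutations fixing the coefficients at that stage, so a vanishing combination of too few
  powers is killed by a Vandermonde determinant (`eq_zero_of_conjugates`,
  `linearIndependent_staircaseMonomial`).

Since `1` belongs to this basis, `Q_m = A + q₂ᵐR` has the `A`-basis consisting of `1` and the
products of `q₂ᵐ` with the other 47 monomials: independence is preserved because `q₂ᵐ` is a nonzero
element of the domain `A`.

On the hyperplane `t₁ + t₂ + t₃ = 0` the group generated by the six reflections is `S₃ × {±1}`. In
terms of the elementary symmetric polynomials `eᵢ` one has there `q₁ = -2e₂` and `q₃ = e₃²`. An
invariant class is represented by a symmetric polynomial (average over `S₃`), hence by a polynomial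
in `e₂` and `e₃`; averaging over `±1` leaves only even powers of `e₃` (`even_part_mem`).
-/


open MvPolynomial

noncomputable section

/-- `q₁ = t₁² + t₂² + t₃²`. -/
def q1 : MvPolynomial (Fin 3) ℚ := X 0 ^ 2 + X 1 ^ 2 + X 2 ^ 2

/-- `q₂ = t₁²t₂² + t₁²t₃² + t₂²t₃²`. -/
def q2 : MvPolynomial (Fin 3) ℚ :=
  X 0 ^ 2 * X 1 ^ 2 + X 0 ^ 2 * X 2 ^ 2 + X 1 ^ 2 * X 2 ^ 2

/-- `q₃ = t₁²t₂²t₃²`. -/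
def q3 : MvPolynomial (Fin 3) ℚ := X 0 ^ 2 * X 1 ^ 2 * X 2 ^ 2

/-- The abstract surjection `ℚ[q₁,q₂,q₃] → ℚ[q₁,q₃]` sending `q₂ ↦ 0`. -/
def killq2 : MvPolynomial (Fin 3) ℚ →ₐ[ℚ] MvPolynomial (Fin 2) ℚ :=
  aeval ![X 0, 0, X 1]

/-- The six reflections of `D₆ ⊂ B₃`, as algebra endomorphisms of `ℚ[t₁,t₂,t₃]`. -/
def D6refl : Fin 6 → (MvPolynomial (Fin 3) ℚ →ₐ[ℚ] MvPolynomial (Fin 3) ℚ) :=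
  ![aeval ![-X 1, -X 0, -X 2],
    aeval ![-X 2, -X 1, -X 0],
    aeval ![-X 0, -X 2, -X 1],
    aeval ![X 2, X 1, X 0],
    aeval ![X 1, X 0, X 2],
    aeval ![X 0, X 2, X 1]]

/-- The ideal of the reflection hyperplane `t₁ + t₂ + t₃ = 0`. -/
def hypIdeal : Ideal (MvPolynomial (Fin 3) ℚ) :=
  Ideal.span {(X 0 : MvPolynomial (Fin 3) ℚ) + X 1 + X 2}

/-! ### The map killing `q₂` -/

lemma killq2_surjective : Function.Surjective killq2 := by
  have h : killq2.comp (aeval ![X 0, X 2]) = AlgHom.id ℚ (MvPolynomial (Fin 2) ℚ) := by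
    ext i : 1
    fin_cases i <;> simp [killq2]
  exact fun p => ⟨aeval ![X 0, X 2] p, by simpa using DFunLike.congr_fun h p⟩

lemma ker_killq2 :
    RingHom.ker killq2 = Ideal.span {(X 1 : MvPolynomial (Fin 3) ℚ)} := by
  apply le_antisymm
  · intro f hf
    -- Modulo `X 1`, the map `killq2` followed by its section is the identity.
    have h : ((Ideal.Quotient.mkₐ ℚ (Ideal.span {(X 1 : MvPolynomial (Fin 3) ℚ)})).comp
        (aeval ![X 0, X 2])).comp killq2 =
        Ideal.Quotient.mkₐ ℚ (Ideal.span {(X 1 : MvPolynomial (Fin 3) ℚ)}) := by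
      ext i : 1
      fin_cases i <;> simp [killq2]
    have h2 := DFunLike.congr_fun h f
    rw [RingHom.mem_ker] at hf
    simp only [AlgHom.comp_apply] at h2
    rw [hf, map_zero, map_zero] at h2
    exact Ideal.Quotient.eq_zero_iff_mem.mp h2.symm
  · rw [Ideal.span_singleton_le_iff_mem, RingHom.mem_ker]
    simp [killq2]

/-! ### Invariants on the hyperplane -/

lemma D6refl_mem_hypIdeal (j : Fin 6) {f : MvPolynomial (Fin 3) ℚ} (hf : f ∈ hypIdeal) :
    D6refl j f ∈ hypIdeal := by
  obtain ⟨g, rfl⟩ := Ideal.mem_span_singleton'.mp hf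
  rw [map_mul]
  apply Ideal.mul_mem_left
  have key : D6refl j (X 0 + X 1 + X 2) = X 0 + X 1 + X 2 ∨
      D6refl j (X 0 + X 1 + X 2) = -(X 0 + X 1 + X 2) := by
    fin_cases j <;> simp [D6refl]
    · right; ring
    · right; ring
    · right; ring
    · left; ring
    · left; ring
    · left; ring
  have hm : (X 0 + X 1 + X 2 : MvPolynomial (Fin 3) ℚ) ∈ hypIdeal :=
    Ideal.mem_span_singleton_self _
  rcases key with h | h <;> rw [h]
  · exact hm
  · exact neg_mem hm

lemma D6refl_eq_self (j : Fin 6) {f : MvPolynomial (Fin 3) ℚ}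
    (hf : f ∈ Algebra.adjoin ℚ {q1, q3}) : D6refl j f = f := by
  induction hf using Algebra.adjoin_induction with
  | mem x hx =>
    rcases hx with rfl | rfl <;> fin_cases j <;> simp [D6refl, q1, q3] <;> ring
  | algebraMap r => simp
  | add x y _ _ hx hy => rw [map_add, hx, hy]
  | mul x y _ _ hx hy => rw [map_mul, hx, hy]

/-- The algebra `ℚ[q₁,q₃]` restricted to the hyperplane. -/
abbrev hypInvariants : Subalgebra ℚ (MvPolynomial (Fin 3) ℚ ⧸ hypIdeal) :=
  (Algebra.adjoin ℚ {q1, q3}).map (Ideal.Quotient.mkₐ ℚ hypIdeal)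

/-- The elementary symmetric polynomials in three variables, written out. -/
def elemSymm : Fin 3 → MvPolynomial (Fin 3) ℚ :=
  ![X 0 + X 1 + X 2, X 0 * X 1 + X 0 * X 2 + X 1 * X 2, X 0 * X 1 * X 2]

/-- The substitution `tᵢ ↦ -tᵢ`. -/
def negVars : MvPolynomial (Fin 3) ℚ →ₐ[ℚ] MvPolynomial (Fin 3) ℚ :=
  aeval fun i => -X i

lemma mk_elemSymm_zero : Ideal.Quotient.mk hypIdeal (elemSymm 0) = 0 :=
  Ideal.Quotient.eq_zero_iff_mem.mpr (Ideal.mem_span_singleton_self _)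

lemma mk_elemSymm_one_mem : Ideal.Quotient.mk hypIdeal (elemSymm 1) ∈ hypInvariants := by
  refine ⟨(-1 / 2 : ℚ) • q1, Subalgebra.smul_mem _ (Algebra.subset_adjoin (by simp)) _, ?_⟩
  refine Ideal.Quotient.eq.mpr ?_
  -- `q₁ = e₁² - 2e₂`
  refine Ideal.mem_span_singleton'.mpr ⟨(-1 / 2 : ℚ) • (X 0 + X 1 + X 2), ?_⟩
  have h2 : (C (-1 / 2 : ℚ) : MvPolynomial (Fin 3) ℚ) * 2 = -1 := by
    rw [show (2 : MvPolynomial (Fin 3) ℚ) = C 2 from (map_ofNat C 2).symm, ← C_mul]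
    norm_num
  simp only [smul_eq_C_mul, elemSymm, q1, Matrix.cons_val_one, Matrix.cons_val_zero]
  linear_combination (X 0 * X 1 + X 0 * X 2 + X 1 * X 2) * h2

lemma mk_elemSymm_two_sq_mem : Ideal.Quotient.mk hypIdeal (elemSymm 2) ^ 2 ∈ hypInvariants := by
  have h : elemSymm 2 ^ 2 = q3 := by
    simp only [q3, elemSymm, Matrix.cons_val]
    ring
  rw [← map_pow, h]
  exact ⟨q3, Algebra.subset_adjoin (by simp), rfl⟩

lemma pow_add_neg_pow_mem {S : Type*} [CommRing S] [Algebra ℚ S] {T : Subalgebra ℚ S} {y : S}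
    (hy : y ^ 2 ∈ T) (n : ℕ) : y ^ n + (-y) ^ n ∈ T := by
  rcases Nat.even_or_odd n with h | h
  · rw [h.neg_pow]
    obtain ⟨k, rfl⟩ := h
    rw [← two_mul k, pow_mul]
    exact add_mem (pow_mem hy _) (pow_mem hy _)
  · rw [h.neg_pow, add_neg_cancel]
    exact zero_mem _

/-- The sum over `±1` of a symmetric polynomial restricts on the hyperplane to a polynomial in
`e₂` and `e₃²`: odd powers of `e₃` cancel, and `e₁` vanishes. -/
lemma even_part_mem (P : MvPolynomial (Fin 3) ℚ) :
    Ideal.Quotient.mk hypIdeal (aeval elemSymm P) +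
      Ideal.Quotient.mk hypIdeal (negVars (aeval elemSymm P)) ∈ hypInvariants := by
  induction P using MvPolynomial.induction_on' with
  | monomial u a =>
    have n0 : negVars (elemSymm 0) = -elemSymm 0 := by simp [negVars, elemSymm]; ring
    have n1 : negVars (elemSymm 1) = elemSymm 1 := by simp [negVars, elemSymm]
    have n2 : negVars (elemSymm 2) = -elemSymm 2 := by simp [negVars, elemSymm]
    rw [aeval_monomial, Finsupp.prod_fintype _ _ (by simp)]
    simp only [Fin.prod_univ_three, map_mul, map_pow, n0, n1, n2, map_neg, mk_elemSymm_zero,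
      AlgHom.commutes, neg_zero]
    set x := Ideal.Quotient.mk hypIdeal (elemSymm 1)
    set y := Ideal.Quotient.mk hypIdeal (elemSymm 2)
    have hc : Ideal.Quotient.mk hypIdeal (algebraMap ℚ _ a) * (0 ^ u 0 * x ^ u 1) ∈
        hypInvariants :=
      mul_mem (hypInvariants.algebraMap_mem a)
        (mul_mem (pow_mem (zero_mem _) _) (pow_mem mk_elemSymm_one_mem _))
    have hy : y ^ u 2 + (-y) ^ u 2 ∈ hypInvariants := pow_add_neg_pow_mem mk_elemSymm_two_sq_mem _
    convert mul_mem hc hy using 1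
    ring
  | add p q hp hq =>
    simp only [map_add]
    convert add_mem hp hq using 1
    ring

lemma esymm_eq_elemSymm (i : Fin 3) : esymm (Fin 3) ℚ (i + 1) = elemSymm i := by
  have h2 : Finset.powersetCard 2 (Finset.univ : Finset (Fin 3)) = {{0, 1}, {0, 2}, {1, 2}} := by
    decide
  have h3 : Finset.powersetCard 3 (Finset.univ : Finset (Fin 3)) = {{0, 1, 2}} := by
    decide
  fin_cases i
  · simp [esymm_one, elemSymm, Fin.sum_univ_three]
  · simp only [esymm, elemSymm]
    norm_num [h2]
    rw [Finset.sum_insert (by decide), Finset.sum_insert (by decide), Finset.sum_singleton,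
      Finset.prod_pair (by decide), Finset.prod_pair (by decide), Finset.prod_pair (by decide)]
    ring
  · simp only [esymm, elemSymm]
    norm_num [h3]
    rw [Finset.prod_insert (by decide), Finset.prod_pair (by decide)]
    simp [mul_assoc]

lemma exists_aeval_elemSymm {f : MvPolynomial (Fin 3) ℚ} (hf : f.IsSymmetric) :
    ∃ P : MvPolynomial (Fin 3) ℚ, aeval elemSymm P = f := by
  obtain ⟨P, hP⟩ := esymmAlgHom_fin_surjective (m := 3) (n := 3) ℚ le_rfl ⟨f, hf⟩
  refine ⟨P, ?_⟩
  have h : f = aeval (fun i : Fin 3 => esymm (Fin 3) ℚ (i + 1)) P := by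
    rw [← esymmAlgHom_apply, hP]
  rw [h]
  congr 2
  funext i
  exact (esymm_eq_elemSymm i).symm

lemma mem_hypInvariants_iff (h : MvPolynomial (Fin 3) ℚ ⧸ hypIdeal) :
    h ∈ hypInvariants ↔ ∀ (j : Fin 6) (f : MvPolynomial (Fin 3) ℚ),
      Ideal.Quotient.mk hypIdeal f = h → Ideal.Quotient.mk hypIdeal (D6refl j f) = h := by
  constructor
  · rintro ⟨f₀, hf₀, rfl⟩ j f hf
    change Ideal.Quotient.mk hypIdeal f = Ideal.Quotient.mk hypIdeal f₀ at hf
    change _ = Ideal.Quotient.mk hypIdeal f₀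
    rw [Ideal.Quotient.eq] at hf ⊢
    have := D6refl_mem_hypIdeal j hf
    rwa [map_sub, D6refl_eq_self j hf₀] at this
  · intro H
    -- The last three reflections are the transpositions of the variables.
    have hswap : ∀ x y : Fin 3, x ≠ y → ∃ j, D6refl j = rename (Equiv.swap x y) := by
      have h3 : D6refl 3 = rename (Equiv.swap 0 2) := by
        ext i : 1
        fin_cases i <;> simp [D6refl, Equiv.swap_apply_def]
      have h4 : D6refl 4 = rename (Equiv.swap 0 1) := by
        ext i : 1
        fin_cases i <;> simp [D6refl, Equiv.swap_apply_def]
      have h5 : D6refl 5 = rename (Equiv.swap 1 2) := by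
        ext i : 1
        fin_cases i <;> simp [D6refl, Equiv.swap_apply_def]
      intro x y hxy
      fin_cases x <;> fin_cases y
      · exact absurd rfl hxy
      · exact ⟨4, h4⟩
      · exact ⟨3, h3⟩
      · exact ⟨4, by rw [h4, Equiv.swap_comm]; rfl⟩
      · exact absurd rfl hxy
      · exact ⟨5, h5⟩
      · exact ⟨3, by rw [h3, Equiv.swap_comm]; rfl⟩
      · exact ⟨5, by rw [h5, Equiv.swap_comm]; rfl⟩
      · exact absurd rfl hxy
    have hperm : ∀ (σ : Equiv.Perm (Fin 3)) (f : MvPolynomial (Fin 3) ℚ),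
        Ideal.Quotient.mk hypIdeal f = h → Ideal.Quotient.mk hypIdeal (rename σ f) = h := by
      intro σ
      induction σ using Equiv.Perm.swap_induction_on with
      | one => intro f hf; simpa using hf
      | swap_mul σ x y hxy ih =>
        intro f hf
        obtain ⟨j, hj⟩ := hswap x y hxy
        have := H j _ (ih f hf)
        rwa [hj, rename_rename] at this
    -- `-1` is the product of the first reflection and a transposition.
    have hneg : ∀ f : MvPolynomial (Fin 3) ℚ,
        Ideal.Quotient.mk hypIdeal f = h → Ideal.Quotient.mk hypIdeal (negVars f) = h := by
      intro f hf
      have e : (D6refl 0).comp (D6refl 4) = negVars := by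
        ext i : 1
        fin_cases i <;> simp [D6refl, negVars]
      rw [← e]
      exact H 0 _ (H 4 _ hf)
    obtain ⟨f, hf⟩ := Ideal.Quotient.mk_surjective h
    have hsymm : (∑ σ : Equiv.Perm (Fin 3), rename σ f).IsSymmetric := by
      intro e
      simp only [map_sum, rename_rename]
      exact Fintype.sum_equiv (Equiv.mulLeft e) _ _ fun σ => rfl
    obtain ⟨P, hP⟩ := exists_aeval_elemSymm hsymm
    have h1 : Ideal.Quotient.mk hypIdeal (aeval elemSymm P) = (6 : ℚ) • h := by
      rw [hP, map_sum, Finset.sum_congr rfl fun σ _ => hperm σ f hf, Finset.sum_const,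
        Finset.card_univ, Fintype.card_perm, Fintype.card_fin, ← Nat.cast_smul_eq_nsmul ℚ]
      norm_num [Nat.factorial]
    have h2 : Ideal.Quotient.mk hypIdeal (negVars (aeval elemSymm P)) = (6 : ℚ) • h := by
      rw [hP, map_sum, map_sum,
        Finset.sum_congr rfl fun σ _ => hneg _ (hperm σ f hf), Finset.sum_const,
        Finset.card_univ, Fintype.card_perm, Fintype.card_fin, ← Nat.cast_smul_eq_nsmul ℚ]
      norm_num [Nat.factorial]
    have h3 := even_part_mem P
    rw [h1, h2, ← add_smul] at h3
    have h4 := hypInvariants.smul_mem h3 (1 / 12 : ℚ)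
    rw [smul_smul] at h4
    norm_num at h4
    exact h4

/-! ### Freeness of the polynomial ring over the invariants of `B₃` -/

/-- The invariant ring `ℚ[q₁,q₂,q₃]` of `B₃`. -/
abbrev B3Invariants : Subalgebra ℚ (MvPolynomial (Fin 3) ℚ) := Algebra.adjoin ℚ {q1, q2, q3}

/-- The monomial `t₁ᵃ t₂ᵇ t₃ᶜ` with exponents in the staircase `a < 6`, `b < 4`, `c < 2`. -/
def staircaseMonomial (p : Fin 6 × Fin 4 × Fin 2) : MvPolynomial (Fin 3) ℚ :=
  X 0 ^ (p.1 : ℕ) * X 1 ^ (p.2.1 : ℕ) * X 2 ^ (p.2.2 : ℕ)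

/-- The signed substitution `tᵢ ↦ sᵢ t_{σ i}`. -/
def signedPerm (s : Fin 3 → ℚ) (σ : Fin 3 → Fin 3) :
    MvPolynomial (Fin 3) ℚ →ₐ[ℚ] MvPolynomial (Fin 3) ℚ :=
  aeval fun i => C (s i) * X (σ i)

lemma signedPerm_eq_self {s : Fin 3 → ℚ} (hs : ∀ i, s i ^ 2 = 1) (σ : Equiv.Perm (Fin 3))
    {f : MvPolynomial (Fin 3) ℚ} (hf : f ∈ B3Invariants) : signedPerm s σ f = f := by
  have hX : ∀ i, signedPerm s σ (X i ^ 2) = X (σ i) ^ 2 := by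
    intro i
    simp only [signedPerm, map_pow, aeval_X]
    rw [mul_pow, ← C_pow, hs, C_1, one_mul]
  induction hf using Algebra.adjoin_induction with
  | mem x hx =>
    have hfin : ∀ τ : Equiv.Perm (Fin 3),
        ((τ 0, τ 1, τ 2) : Fin 3 × Fin 3 × Fin 3) ∈
          ({(0, 1, 2), (0, 2, 1), (1, 0, 2), (1, 2, 0), (2, 0, 1), (2, 1, 0)} :
            Finset (Fin 3 × Fin 3 × Fin 3)) := by decide
    have h := hfin σ
    simp only [Finset.mem_insert, Finset.mem_singleton, Prod.mk.injEq] at h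
    rcases hx with rfl | rfl | rfl <;> simp only [q1, q2, q3, map_add, map_mul, hX] <;>
      rcases h with ⟨h0, h1, h2⟩ | ⟨h0, h1, h2⟩ | ⟨h0, h1, h2⟩ | ⟨h0, h1, h2⟩ | ⟨h0, h1, h2⟩ |
        ⟨h0, h1, h2⟩ <;> rw [h0, h1, h2] <;> ring
  | algebraMap r => simp
  | add x y _ _ hx hy => rw [map_add, hx, hy]
  | mul x y _ _ hx hy => rw [map_mul, hx, hy]

/-- An element with `n` distinct conjugates under endomorphisms fixing the coefficients satisfies
no nontrivial relation of degree less than `n`. -/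
lemma eq_zero_of_conjugates {n : ℕ} (x : MvPolynomial (Fin 3) ℚ)
    (φ : Fin n → MvPolynomial (Fin 3) ℚ →ₐ[ℚ] MvPolynomial (Fin 3) ℚ)
    (hφ : Function.Injective fun j => φ j x) (v : Fin n → MvPolynomial (Fin 3) ℚ)
    (hv : ∀ j i, φ j (v i) = v i) (h : ∑ i, v i * x ^ (i : ℕ) = 0) (i : Fin n) : v i = 0 := by
  have key : v = 0 := by
    refine Matrix.eq_zero_of_forall_index_sum_mul_pow_eq_zero hφ fun j => ?_
    have := congrArg (φ j) h
    simpa only [map_sum, map_mul, map_pow, hv, map_zero] using this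
  exact congrFun key i

/-- Distinctness of images is tested by evaluating at the point `(1, 2, 3)`. -/
lemma injective_of_eval {n : ℕ} {g : Fin n → MvPolynomial (Fin 3) ℚ} (w : Fin n → ℚ)
    (hw : Function.Injective w) (h : ∀ j, eval (fun i : Fin 3 => (i : ℚ) + 1) (g j) = w j) :
    Function.Injective g := fun a b hab => hw (by rw [← h, ← h, hab])

lemma linearIndependent_staircaseMonomial :
    LinearIndependent B3Invariants staircaseMonomial := by
  rw [Fintype.linearIndependent_iff]
  rintro g hg ⟨a, b, c⟩
  have hinv : ∀ (s : Fin 3 → ℚ) (_ : ∀ i, s i ^ 2 = 1) (σ : Equiv.Perm (Fin 3)) (p),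
      signedPerm s σ (g p : MvPolynomial (Fin 3) ℚ) = g p :=
    fun s hs σ p => signedPerm_eq_self hs σ (g p).2
  -- Peel off `t₃`, with conjugates `±t₃` over the invariants and `t₁`, `t₂`.
  have hc : ∀ c : Fin 2, ∑ b : Fin 4, (∑ a : Fin 6, (g (a, b, c) : MvPolynomial (Fin 3) ℚ) *
      X 0 ^ (a : ℕ)) * X 1 ^ (b : ℕ) = 0 := by
    refine eq_zero_of_conjugates (X 2) ![signedPerm 1 (1 : Equiv.Perm (Fin 3)),
      signedPerm ![1, 1, -1] (1 : Equiv.Perm (Fin 3))] ?_ _ ?_ ?_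
    · refine injective_of_eval ![3, -3] (by decide) fun j => ?_
      fin_cases j <;> simp [signedPerm] <;> norm_num
    · intro j i
      fin_cases j <;> simp only [Matrix.cons_val, map_sum, map_mul, map_pow, Fin.zero_eta,
        Fin.mk_one]
      · simp_rw [hinv 1 (by simp) 1]
        simp [signedPerm]
      · simp_rw [hinv ![1, 1, -1] (by simp [Fin.forall_fin_succ]) 1]
        simp [signedPerm]
    · rw [← hg, Fintype.sum_prod_type_right, Fintype.sum_prod_type_right]
      refine Finset.sum_congr rfl fun c _ => ?_
      rw [Finset.sum_mul]
      refine Finset.sum_congr rfl fun b _ => ?_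
      rw [Finset.sum_mul, Finset.sum_mul]
      refine Finset.sum_congr rfl fun a _ => ?_
      simp only [staircaseMonomial, Subalgebra.smul_def, smul_eq_mul]
      ring
  -- Peel off `t₂`, with conjugates `±t₂`, `±t₃` over the invariants and `t₁`.
  have hb : ∀ b : Fin 4, ∑ a : Fin 6, (g (a, b, c) : MvPolynomial (Fin 3) ℚ) *
      X 0 ^ (a : ℕ) = 0 := by
    refine eq_zero_of_conjugates (X 1) ![signedPerm 1 (1 : Equiv.Perm (Fin 3)),
      signedPerm ![1, -1, 1] (1 : Equiv.Perm (Fin 3)), signedPerm 1 (Equiv.swap (1 : Fin 3) 2),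
      signedPerm ![1, -1, 1] (Equiv.swap (1 : Fin 3) 2)] ?_ _ ?_ (hc c)
    · refine injective_of_eval ![2, -2, 3, -3] (by decide) fun j => ?_
      fin_cases j <;> norm_num [signedPerm]
    · intro j i
      fin_cases j <;> simp only [Matrix.cons_val, map_sum, map_mul, map_pow, Fin.reduceFinMk,
        Fin.zero_eta, Fin.mk_one]
      · simp_rw [hinv 1 (by simp) 1]
        simp [signedPerm]
      · simp_rw [hinv ![1, -1, 1] (by simp [Fin.forall_fin_succ]) 1]
        simp [signedPerm]
      · simp_rw [hinv 1 (by simp) (Equiv.swap (1 : Fin 3) 2)]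
        simp [signedPerm, Equiv.swap_apply_def]
      · simp_rw [hinv ![1, -1, 1] (by simp [Fin.forall_fin_succ]) (Equiv.swap (1 : Fin 3) 2)]
        simp [signedPerm, Equiv.swap_apply_def]
  -- Over the invariants, `t₁` has the six conjugates `±tᵢ`.
  have ha : ∀ a : Fin 6, (g (a, b, c) : MvPolynomial (Fin 3) ℚ) = 0 := by
    refine eq_zero_of_conjugates (X 0) ![signedPerm 1 (1 : Equiv.Perm (Fin 3)),
      signedPerm (-1) (1 : Equiv.Perm (Fin 3)), signedPerm 1 (Equiv.swap (0 : Fin 3) 1),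
      signedPerm (-1) (Equiv.swap (0 : Fin 3) 1), signedPerm 1 (Equiv.swap (0 : Fin 3) 2),
      signedPerm (-1) (Equiv.swap (0 : Fin 3) 2)] ?_ _ ?_ (hb b)
    · refine injective_of_eval ![1, -1, 2, -2, 3, -3] (by decide) fun j => ?_
      fin_cases j <;> norm_num [signedPerm]
    · intro j i
      fin_cases j <;> exact hinv _ (by simp) _ _
  exact Subtype.ext (ha a)

/-- Every monomial reduces to the staircase: `t₁⁶`, `t₂⁴` and `t₃²` are rewritten through the
monic equations of `t₁` over the invariants, of `t₂` after adjoining `t₁`, and of `t₃` after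
adjoining `t₁` and `t₂`. -/
lemma staircaseMonomial_mem_span (a b c : ℕ) :
    (X 0 ^ a * X 1 ^ b * X 2 ^ c : MvPolynomial (Fin 3) ℚ) ∈
      Submodule.span B3Invariants (Set.range staircaseMonomial) := by
  set N := Submodule.span B3Invariants (Set.range staircaseMonomial)
  have hmul : ∀ {r x : MvPolynomial (Fin 3) ℚ}, r ∈ B3Invariants → x ∈ N → r * x ∈ N :=
    fun {r x} hr hx => N.smul_mem ⟨r, hr⟩ hx
  have m1 : q1 ∈ B3Invariants := Algebra.subset_adjoin (by simp)
  have m2 : q2 ∈ B3Invariants := Algebra.subset_adjoin (by simp)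
  have m3 : q3 ∈ B3Invariants := Algebra.subset_adjoin (by simp)
  have ha : ∀ a b c : ℕ, b < 4 → c < 2 →
      (X 0 ^ a * X 1 ^ b * X 2 ^ c : MvPolynomial (Fin 3) ℚ) ∈ N := by
    intro a
    induction a using Nat.strong_induction_on with
    | _ a ih =>
      intro b c hb hc
      by_cases h : a < 6
      · exact Submodule.subset_span ⟨(⟨a, h⟩, ⟨b, hb⟩, ⟨c, hc⟩), rfl⟩
      · obtain ⟨k, rfl⟩ := Nat.exists_eq_add_of_le' (not_lt.mp h)
        have h1 := hmul m1 (ih (k + 4) (by omega) b c hb hc)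
        have h2 := hmul m2 (ih (k + 2) (by omega) b c hb hc)
        have h3 := hmul m3 (ih k (by omega) b c hb hc)
        convert add_mem (sub_mem h1 h2) h3 using 1
        simp only [q1, q2, q3]
        ring
  have hb : ∀ b a c : ℕ, c < 2 →
      (X 0 ^ a * X 1 ^ b * X 2 ^ c : MvPolynomial (Fin 3) ℚ) ∈ N := by
    intro b
    induction b using Nat.strong_induction_on with
    | _ b ih =>
      intro a c hc
      by_cases h : b < 4
      · exact ha a b c h hc
      · obtain ⟨k, rfl⟩ := Nat.exists_eq_add_of_le' (not_lt.mp h)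
        have h1 := hmul m1 (ih (k + 2) (by omega) a c hc)
        have h2 := ih (k + 2) (by omega) (a + 2) c hc
        have h3 := hmul m2 (ih k (by omega) a c hc)
        have h4 := hmul m1 (ih k (by omega) (a + 2) c hc)
        have h5 := ih k (by omega) (a + 4) c hc
        convert sub_mem (add_mem (sub_mem (sub_mem h1 h2) h3) h4) h5 using 1
        simp only [q1, q2]
        ring
  induction c using Nat.strong_induction_on generalizing a b with
  | _ c ih =>
    by_cases h : c < 2
    · exact hb b a c h
    · obtain ⟨k, rfl⟩ := Nat.exists_eq_add_of_le' (not_lt.mp h)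
      have h1 := hmul m1 (ih k (by omega) a b)
      have h2 := ih k (by omega) (a + 2) b
      have h3 := ih k (by omega) a (b + 2)
      convert sub_mem (sub_mem h1 h2) h3 using 1
      simp only [q1]
      ring

lemma span_staircaseMonomial :
    Submodule.span B3Invariants (Set.range staircaseMonomial) = ⊤ := by
  refine Submodule.eq_top_iff'.mpr fun f => ?_
  induction f using MvPolynomial.induction_on' with
  | monomial u a =>
    rw [monomial_eq, Finsupp.prod_fintype _ _ (by simp), Fin.prod_univ_three]
    exact Submodule.smul_mem _ (⟨C a, B3Invariants.algebraMap_mem a⟩ : B3Invariants)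
      (staircaseMonomial_mem_span _ _ _)
  | add p q hp hq => exact add_mem hp hq

/-! ### The basis of the relative quasi-invariants -/

lemma q2_ne_zero : q2 ≠ 0 := by
  intro h
  have := congrArg (eval (fun _ => (1 : ℚ))) h
  norm_num [q2] at this

lemma exists_basis_quasiInvariants (m : ℕ) :
    ∃ bas : Fin 48 → MvPolynomial (Fin 3) ℚ,
      (∀ i, ∃ a ∈ Algebra.adjoin ℚ {q1, q2, q3},
          ∃ y : MvPolynomial (Fin 3) ℚ, bas i = a + q2 ^ m * y) ∧
      ∀ f : MvPolynomial (Fin 3) ℚ,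
        (∃ a ∈ Algebra.adjoin ℚ {q1, q2, q3},
            ∃ y : MvPolynomial (Fin 3) ℚ, f = a + q2 ^ m * y) →
        ∃! c : Fin 48 → Algebra.adjoin ℚ {q1, q2, q3},
          f = ∑ i, (c i : MvPolynomial (Fin 3) ℚ) * bas i := by
  classical
  let e : Fin 48 ≃ Fin 6 × Fin 4 × Fin 2 := (Fintype.equivFinOfCardEq (by simp)).symm
  let B : Module.Basis (Fin 48) B3Invariants (MvPolynomial (Fin 3) ℚ) :=
    (Module.Basis.mk linearIndependent_staircaseMonomial span_staircaseMonomial.ge).reindex e.symm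
  let i₀ : Fin 48 := e.symm (0, 0, 0)
  have hB₀ : B i₀ = 1 := by simp [B, i₀, staircaseMonomial]
  let θ : B3Invariants := ⟨q2 ^ m, pow_mem (Algebra.subset_adjoin (by simp)) m⟩
  have hθ : θ ≠ 0 := fun h => pow_ne_zero m q2_ne_zero (congrArg Subtype.val h)
  let u : Fin 48 → B3Invariants := fun i => if i = i₀ then 1 else θ
  have hu : ∀ i, u i ≠ 0 := by
    intro i
    by_cases h : i = i₀ <;> simp [u, h, hθ]
  refine ⟨fun i => u i * B i, fun i => ?_, ?_⟩
  · by_cases h : i = i₀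
    · exact ⟨1, one_mem _, 0, by simp [u, h, hB₀]⟩
    · exact ⟨0, zero_mem _, B i, by simp [u, h, θ]⟩
  · rintro f ⟨a, ha, y, rfl⟩
    refine existsUnique_of_exists_of_unique ?_ ?_
    · -- The part of `y` along `1` is absorbed into the invariant summand.
      refine ⟨fun i => if i = i₀ then ⟨a, ha⟩ + θ * B.repr y i else B.repr y i, ?_⟩
      have hy := B.sum_repr y
      have hy' : q2 ^ m * y = ∑ i, (θ : MvPolynomial (Fin 3) ℚ) * (B.repr y i * B i) := by
        rw [← Finset.mul_sum]
        exact congrArg (q2 ^ m * ·) hy.symm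
      have ha' : a = ∑ i, if i = i₀ then a else 0 := by simp
      rw [hy']
      nth_rewrite 1 [ha']
      rw [← Finset.sum_add_distrib]
      refine Finset.sum_congr rfl fun i _ => ?_
      by_cases h : i = i₀
      · simp [u, h, hB₀]
      · simp only [u, h, if_false]
        ring
    · intro c d hc hd
      have hli := Fintype.linearIndependent_iff.mp B.linearIndependent
        (fun i => (c i - d i) * u i) ?_
      · funext i
        exact sub_eq_zero.mp ((mul_eq_zero.mp (hli i)).resolve_right (hu i))
      · have := sub_eq_zero.mpr (hc.symm.trans hd)
        rw [← Finset.sum_sub_distrib] at this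
        rw [← this]
        refine Finset.sum_congr rfl fun i _ => ?_
        simp only [Subalgebra.smul_def, smul_eq_mul]
        push_cast
        ring

/-- (a) the map `ℚ[q₁,q₂,q₃] → ℚ[q₁,q₃]`, `q₂ ↦ 0`, is surjective with
kernel `(q₂)`; (b) on the hyperplane `t₁+t₂+t₃ = 0`, the image of `ℚ[q₁,q₃]` is exactly
the ring of invariants of the dihedral group `D₆` acting as specified; (c) consequently
`Q_m(B₃,D₆) = ℚ[q₁,q₂,q₃] + q₂^m·ℚ[t₁,t₂,t₃]` is a free `ℚ[q₁,q₂,q₃]`-module of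
rank `48`. -/
theorem B3_D6_relative_quasi_invariants (m : ℕ) :
    (Function.Surjective killq2 ∧
      RingHom.ker killq2 = Ideal.span {(X 1 : MvPolynomial (Fin 3) ℚ)}) ∧
    (∀ h : MvPolynomial (Fin 3) ℚ ⧸ hypIdeal,
      (h ∈ (Algebra.adjoin ℚ {q1, q3}).map (Ideal.Quotient.mkₐ ℚ hypIdeal)) ↔
        ∀ (j : Fin 6) (f : MvPolynomial (Fin 3) ℚ),
          Ideal.Quotient.mk hypIdeal f = h →
            Ideal.Quotient.mk hypIdeal (D6refl j f) = h) ∧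
    (∃ bas : Fin 48 → MvPolynomial (Fin 3) ℚ,
      (∀ i, ∃ a ∈ Algebra.adjoin ℚ {q1, q2, q3},
          ∃ y : MvPolynomial (Fin 3) ℚ, bas i = a + q2 ^ m * y) ∧
      ∀ f : MvPolynomial (Fin 3) ℚ,
        (∃ a ∈ Algebra.adjoin ℚ {q1, q2, q3},
            ∃ y : MvPolynomial (Fin 3) ℚ, f = a + q2 ^ m * y) →
        ∃! c : Fin 48 → Algebra.adjoin ℚ {q1, q2, q3},
          f = ∑ i, (c i : MvPolynomial (Fin 3) ℚ) * bas i) := by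
  exact ⟨⟨killq2_surjective, ker_killq2⟩, mem_hypInvariants_iff, exists_basis_quasiInvariants m⟩

end
end
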